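/- arXiv:math/0511281 — 7 statements merged into one kernel-verified Lean document; each statement's English description precedes it below -/
import Mathlib

section
/- Let θ : [0,∞) → [0,∞) be differentiable with uniformly bounded derivative (there is K > 0 with |θ′(t)| ≤ K for all t ≥ 0). Let ε ∈ (0, 1/3) and suppose there are constants C₁, C₂ ≥ 0 and T > 0 such that for all t > T one has ∫₀ᵗ θ(τ)² dτ ≤ C₁ + C₂·t^ε·θ(t)^{1−ε}. Then there exists a sequence (tᵢ) with tᵢ → ∞ such that tᵢ^ε·θ(tᵢ)^{1−ε} → 0. -/
open MeasureTheory Filter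

/-!
If `t ^ ε * θ t ^ (1 - ε)` stayed above a positive constant, it would absorb the constant `C₁`, and
`F t = 1 + ∫ θ²` would satisfy `F ≤ C t ^ ε (F') ^ ((1 - ε) / 2)`. Solving for `F'` gives
`F' ≥ w F ^ p` with `p = 2 / (1 - ε) > 1` and `w` a multiple of `t ^ (-2 ε / (1 - ε))`. A positive
solution of this inequality blows up in finite time unless `∫ w` converges, which fails precisely
when `2 ε / (1 - ε) ≤ 1`, that is, `ε ≤ 1 / 3`.
-/

theorem intervalIntegral_le_of_mul_rpow_le_deriv {H H' w : ℝ → ℝ} {a b p : ℝ} (hp : 1 < p)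
    (hab : a ≤ b) (hH : ContinuousOn H (Set.Icc a b)) (hpos : ∀ t ∈ Set.Icc a b, 0 < H t)
    (hderiv : ∀ t ∈ Set.Ioo a b, HasDerivWithinAt H (H' t) (Set.Ioi t) t)
    (hw : IntegrableOn w (Set.Icc a b)) (hle : ∀ t ∈ Set.Ioo a b, w t * H t ^ p ≤ H' t) :
    ∫ t in a..b, w t ≤ H a ^ (1 - p) / (p - 1) := by
  have hp' : 0 < p - 1 := sub_pos.2 hp
  have hint : ∫ t in a..b, w t ≤ -H b ^ (1 - p) / (p - 1) - -H a ^ (1 - p) / (p - 1) := by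
    refine intervalIntegral.integral_le_sub_of_hasDeriv_right_of_le
      (g := fun t => -H t ^ (1 - p) / (p - 1)) (g' := fun t => H' t * H t ^ (-p)) hab
      ((hH.rpow_const fun t ht => .inl (hpos t ht).ne').neg.div_const _) (fun t ht => ?_) hw
      (fun t ht => ?_)
    · have hHt := (hpos t (Set.Ioo_subset_Icc_self ht)).ne'
      refine (((hderiv t ht).rpow_const (p := 1 - p) (.inl hHt)).neg.div_const
        (p - 1)).congr_deriv ?_
      rw [show 1 - p - 1 = -p by ring]
      field_simp
      ring
    · have hHt := hpos t (Set.Ioo_subset_Icc_self ht)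
      rw [Real.rpow_neg hHt.le, ← div_eq_mul_inv, le_div_iff₀ (Real.rpow_pos_of_pos hHt p)]
      exact hle t ht
  have hb : 0 ≤ H b ^ (1 - p) / (p - 1) :=
    div_nonneg (Real.rpow_nonneg (hpos b (Set.right_mem_Icc.2 hab)).le _) hp'.le
  rw [neg_div, neg_div] at hint
  linarith

theorem intervalIntegral_le_of_add_integral_mul_rpow_le {G w : ℝ → ℝ} {a b m p : ℝ} (hp : 1 < p)
    (hm : 0 < m) (hab : a ≤ b) (hG : ContinuousOn G (Set.Icc a b))
    (hG0 : ∀ t ∈ Set.Icc a b, 0 ≤ G t) (hw : ContinuousOn w (Set.Icc a b))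
    (hw0 : ∀ t ∈ Set.Icc a b, 0 ≤ w t)
    (hle : ∀ t ∈ Set.Icc a b, m + ∫ s in a..t, w s * G s ^ p ≤ G t) :
    ∫ t in a..b, w t ≤ m ^ (1 - p) / (p - 1) := by
  have hp0 : 0 ≤ p := by linarith
  have hcont : ContinuousOn (fun s => w s * G s ^ p) (Set.Icc a b) :=
    hw.mul (hG.rpow_const fun _ _ => .inr hp0)
  -- `G` need not be differentiable, but its lower bound `H` is, and `H' = w G ^ p ≥ w H ^ p`.
  set H : ℝ → ℝ := fun t => m + ∫ s in a..t, w s * G s ^ p with hH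
  have hHm : ∀ t ∈ Set.Icc a b, m ≤ H t := fun t ht =>
    le_add_of_nonneg_right <| intervalIntegral.integral_nonneg ht.1 fun s hs =>
      have hs' : s ∈ Set.Icc a b := ⟨hs.1, hs.2.trans ht.2⟩
      mul_nonneg (hw0 s hs') (Real.rpow_nonneg (hG0 s hs') p)
  have hHpos : ∀ t ∈ Set.Icc a b, 0 < H t := fun t ht => hm.trans_le (hHm t ht)
  have hHcont : ContinuousOn H (Set.Icc a b) := by
    rw [← Set.uIcc_of_le hab] at hcont ⊢
    exact continuousOn_const.add <| intervalIntegral.continuousOn_primitive_interval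
      (hcont.integrableOn_compact isCompact_uIcc)
  have hHderiv : ∀ t ∈ Set.Ioo a b, HasDerivAt H (w t * G t ^ p) t := fun t ht =>
    (intervalIntegral.integral_hasDerivAt_right
      ((hcont.mono (Set.Icc_subset_Icc_right ht.2.le)).intervalIntegrable_of_Icc ht.1.le)
      ((hcont.mono Set.Ioo_subset_Icc_self).stronglyMeasurableAtFilter isOpen_Ioo t ht)
      (hcont.continuousAt (Icc_mem_nhds ht.1 ht.2))).const_add m
  have hHa : H a = m := by simp [hH]
  rw [← hHa]
  refine intervalIntegral_le_of_mul_rpow_le_deriv hp hab hHcont hHpos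
    (fun t ht => (hHderiv t ht).hasDerivWithinAt) hw.integrableOn_Icc fun t ht => ?_
  have ht' := Set.Ioo_subset_Icc_self ht
  exact mul_le_mul_of_nonneg_left
    (Real.rpow_le_rpow (hHpos t ht').le (hle t ht') hp0) (hw0 t ht')

theorem integrableOn_Ioi_of_mul_add_integral_rpow_le {f w : ℝ → ℝ} {a m p : ℝ} (hp : 1 < p)
    (hm : 0 < m) (hf : LocallyIntegrableOn f (Set.Ici a)) (hf0 : ∀ t ∈ Set.Ici a, 0 ≤ f t)
    (hw : ContinuousOn w (Set.Ici a)) (hw0 : ∀ t ∈ Set.Ici a, 0 ≤ w t)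
    (hle : ∀ t ∈ Set.Ici a, w t * (m + ∫ s in a..t, f s) ^ p ≤ f t) :
    IntegrableOn w (Set.Ioi a) := by
  have hf_Icc (b : ℝ) : IntegrableOn f (Set.Icc a b) :=
    hf.integrableOn_compact_subset Set.Icc_subset_Ici_self isCompact_Icc
  have hw_Icc (b : ℝ) : ContinuousOn w (Set.Icc a b) := hw.mono Set.Icc_subset_Ici_self
  have hF (b : ℝ) (hab : a ≤ b) :
      ContinuousOn (fun t => m + ∫ s in a..t, f s) (Set.Icc a b) := by
    have hf_uIcc := hf_Icc b
    rw [← Set.uIcc_of_le hab] at hf_uIcc ⊢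
    exact continuousOn_const.add (intervalIntegral.continuousOn_primitive_interval hf_uIcc)
  have hF0 : ∀ t ∈ Set.Ici a, 0 ≤ m + ∫ s in a..t, f s := fun t ht =>
    add_nonneg hm.le (intervalIntegral.integral_nonneg ht fun s hs => hf0 s hs.1)
  have hF_le : ∀ t ∈ Set.Ici a,
      m + ∫ s in a..t, w s * (m + ∫ r in a..s, f r) ^ p ≤ m + ∫ s in a..t, f s := by
    intro t ht
    have hcont : ContinuousOn (fun s => w s * (m + ∫ r in a..s, f r) ^ p) (Set.Icc a t) :=
      (hw_Icc t).mul ((hF t ht).rpow_const fun _ _ => .inr (by linarith))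
    gcongr
    exact intervalIntegral.integral_mono_on ht (hcont.intervalIntegrable_of_Icc ht)
      ((intervalIntegrable_iff_integrableOn_Icc_of_le ht).2 (hf_Icc t)) fun s hs => hle s hs.1
  refine integrableOn_Ioi_of_intervalIntegral_norm_bounded (m ^ (1 - p) / (p - 1)) a
    (fun b => (hw_Icc b).integrableOn_Icc.mono_set Set.Ioc_subset_Icc_self) tendsto_id ?_
  filter_upwards [eventually_ge_atTop a] with b hab
  have hnorm : ∫ t in a..b, ‖w t‖ = ∫ t in a..b, w t :=
    intervalIntegral.integral_congr fun t ht =>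
      Real.norm_of_nonneg (hw0 t (Set.uIcc_of_le hab ▸ ht).1)
  rw [hnorm]
  exact intervalIntegral_le_of_add_integral_mul_rpow_le hp hm hab (hF b hab)
    (fun t ht => hF0 t ht.1) (hw_Icc b) (fun t ht => hw0 t ht.1) fun t ht => hF_le t ht.1

theorem exists_pos_add_mul_le_mul (c₁ c₂ : ℝ) {δ : ℝ} (hδ : 0 < δ) :
    ∃ C > 0, ∀ x, δ ≤ x → c₁ + c₂ * x ≤ C * x := by
  refine ⟨|c₁| / δ + |c₂| + 1, by positivity, fun x hx => ?_⟩
  have hx0 : 0 < x := hδ.trans_le hx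
  calc c₁ + c₂ * x ≤ |c₁| / δ * δ + |c₂| * x := by
        rw [div_mul_cancel₀ _ hδ.ne']
        gcongr <;> exact le_abs_self _
    _ ≤ |c₁| / δ * x + |c₂| * x + x := by
        have : |c₁| / δ * δ ≤ |c₁| / δ * x := by gcongr
        linarith
    _ = (|c₁| / δ + |c₂| + 1) * x := by ring

theorem integrableOn_Ioi_of_add_integral_le_mul_rpow {f w : ℝ → ℝ} {a b m C : ℝ} (hb0 : 0 < b)
    (hb1 : b < 1) (hm : 0 < m) (hC : 0 < C) (hf : LocallyIntegrableOn f (Set.Ici a))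
    (hf0 : ∀ t ∈ Set.Ici a, 0 ≤ f t) (hw : ContinuousOn w (Set.Ici a))
    (hw0 : ∀ t ∈ Set.Ici a, 0 < w t)
    (hle : ∀ t ∈ Set.Ici a, m + ∫ s in a..t, f s ≤ C * (f t / w t) ^ b) :
    IntegrableOn w (Set.Ioi a) := by
  have hsolved : ∀ t ∈ Set.Ici a, (C ^ b⁻¹)⁻¹ * w t * (m + ∫ s in a..t, f s) ^ b⁻¹ ≤ f t := by
    intro t ht
    have hF0 : 0 ≤ m + ∫ s in a..t, f s :=
      add_nonneg hm.le (intervalIntegral.integral_nonneg ht fun s hs => hf0 s hs.1)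
    have hroot : ((m + ∫ s in a..t, f s) / C) ^ b⁻¹ ≤ f t / w t :=
      (Real.rpow_inv_le_iff_of_pos (by positivity) (div_nonneg (hf0 t ht) (hw0 t ht).le) hb0).2
        ((div_le_iff₀' hC).2 (hle t ht))
    rw [Real.div_rpow hF0 hC.le, le_div_iff₀ (hw0 t ht)] at hroot
    exact le_of_eq_of_le (by ring) hroot
  have hscaled : IntegrableOn (fun t => (C ^ b⁻¹)⁻¹ * w t) (Set.Ioi a) :=
    integrableOn_Ioi_of_mul_add_integral_rpow_le ((one_lt_inv₀ hb0).2 hb1) hm hf hf0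
      (hw.const_mul _) (fun t ht => mul_nonneg (by positivity) (hw0 t ht).le) hsolved
  have hunit : IsUnit (C ^ b⁻¹)⁻¹ := (inv_pos.2 (Real.rpow_pos_of_pos hC _)).ne'.isUnit
  exact (integrable_const_mul_iff hunit w).1 hscaled

theorem frequently_div_lt_of_integral_le_rpow {f w : ℝ → ℝ} {a b C₁ C₂ δ : ℝ} (hb0 : 0 < b)
    (hb1 : b < 1) (hδ : 0 < δ) (hf : LocallyIntegrableOn f (Set.Ici a))
    (hw : ContinuousOn w (Set.Ioi a)) (hw0 : ∀ t ∈ Set.Ioi a, 0 < w t)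
    (hw_int : ¬ IntegrableAtFilter w atTop)
    (hle : ∀ᶠ t in atTop, ∫ s in a..t, f s ≤ C₁ + C₂ * (f t / w t) ^ b) :
    ∃ᶠ t in atTop, f t / w t < δ := by
  intro hcon
  obtain ⟨A, hA⟩ := eventually_atTop.1 ((hle.and hcon).and (eventually_gt_atTop a))
  simp only [not_lt] at hA
  have haA : a < A := (hA A le_rfl).2
  have hsub : Set.Ici A ⊆ Set.Ioi a := Set.Ici_subset_Ioi.2 haA
  have hf0 : ∀ t ∈ Set.Ici A, 0 ≤ f t := fun t ht =>
    ((div_pos_iff_of_pos_right (hw0 t (hsub ht))).1 (hδ.trans_le (hA t ht).1.2)).le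
  have hf_int {c d : ℝ} (hc : a ≤ c) (hcd : c ≤ d) : IntervalIntegrable f volume c d :=
    (intervalIntegrable_iff_integrableOn_Icc_of_le hcd).2 <|
      hf.integrableOn_compact_subset (fun _ hs => hc.trans hs.1) isCompact_Icc
  obtain ⟨C, hC, hC_le⟩ :=
    exists_pos_add_mul_le_mul (1 - (∫ s in a..A, f s) + C₁) C₂ (Real.rpow_pos_of_pos hδ b)
  have hF_le : ∀ t ∈ Set.Ici A, 1 + ∫ s in A..t, f s ≤ C * (f t / w t) ^ b := by
    intro t ht
    have hsplit := intervalIntegral.integral_add_adjacent_intervals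
      (hf_int le_rfl haA.le) (hf_int haA.le ht)
    have habsorb := hC_le _ (Real.rpow_le_rpow hδ.le (hA t ht).1.2 hb0.le)
    linarith [(hA t ht).1.1]
  exact hw_int ⟨_, Ioi_mem_atTop A, integrableOn_Ioi_of_add_integral_le_mul_rpow hb0 hb1 one_pos hC
    (hf.mono_set (Set.Ici_subset_Ici.2 haA.le)) hf0 (hw.mono hsub)
    (fun t ht => hw0 t (hsub ht)) hF_le⟩

theorem mapClusterPt_zero_of_frequently_lt {ι : Type*} {l : Filter ι} {u : ι → ℝ}
    (hu0 : ∀ᶠ i in l, 0 ≤ u i) (hu : ∀ δ > 0, ∃ᶠ i in l, u i < δ) : MapClusterPt 0 l u := by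
  refine Metric.nhds_basis_ball.mapClusterPt_iff_frequently.2 fun δ hδ => ?_
  refine ((hu δ hδ).and_eventually hu0).mono fun i hi => ?_
  rw [Metric.mem_ball, dist_zero_right, Real.norm_of_nonneg hi.2]
  exact hi.1

theorem rpow_mul_rpow_one_sub_eq {t x ε : ℝ} (ht : 0 ≤ t) (hx : 0 ≤ x) (hε : ε ≠ 1) :
    t ^ ε * x ^ (1 - ε) = (x ^ 2 / t ^ (-(2 * ε / (1 - ε)))) ^ ((1 - ε) / 2) := by
  have hε' : 1 - ε ≠ 0 := sub_ne_zero.2 hε.symm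
  rw [Real.rpow_neg ht, div_inv_eq_mul, Real.mul_rpow (by positivity) (by positivity),
    ← Real.rpow_natCast, ← Real.rpow_mul hx, ← Real.rpow_mul ht, mul_comm]
  congr 2
  · push_cast; ring
  · field_simp

theorem stmt0_general {θ : ℝ → ℝ} {ε C₁ C₂ : ℝ}
    (hθ : LocallyIntegrableOn (fun t => θ t ^ 2) (Set.Ici 0)) (hθ0 : ∀ᶠ t in atTop, 0 ≤ θ t)
    (hε : -1 < ε) (hε' : ε ≤ 1 / 3)
    (hint : ∀ᶠ t in atTop, ∫ τ in (0 : ℝ)..t, θ τ ^ 2 ≤ C₁ + C₂ * t ^ ε * θ t ^ (1 - ε)) :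
    ∃ t : ℕ → ℝ, Tendsto t atTop atTop ∧
      Tendsto (fun i => t i ^ ε * θ (t i) ^ (1 - ε)) atTop (nhds 0) := by
  have hb0 : 0 < (1 - ε) / 2 := by linarith
  set w : ℝ → ℝ := fun t => t ^ (-(2 * ε / (1 - ε)))
  have hw : ContinuousOn w (Set.Ioi 0) := fun t ht =>
    (Real.continuousAt_rpow_const t _ (.inl ht.ne')).continuousWithinAt
  have hw_int : ¬ IntegrableAtFilter w atTop := by
    rw [integrableAtFilter_rpow_atTop_iff, not_lt, neg_le_neg_iff, div_le_one (by linarith)]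
    linarith
  have hpow : ∀ᶠ t in atTop, (θ t ^ 2 / w t) ^ ((1 - ε) / 2) = t ^ ε * θ t ^ (1 - ε) := by
    filter_upwards [hθ0, eventually_ge_atTop 0] with t hθt ht
    exact (rpow_mul_rpow_one_sub_eq ht hθt (by linarith)).symm
  have hcluster : MapClusterPt 0 atTop (fun t => θ t ^ 2 / w t) := by
    refine mapClusterPt_zero_of_frequently_lt ?_ fun δ hδ =>
      frequently_div_lt_of_integral_le_rpow (C₁ := C₁) (C₂ := C₂) hb0 (by linarith) hδ hθ hw
        (fun t ht => Real.rpow_pos_of_pos ht _) hw_int ?_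
    · filter_upwards [eventually_ge_atTop 0] with t ht
      exact div_nonneg (sq_nonneg _) (Real.rpow_nonneg ht _)
    · filter_upwards [hint, hpow] with t hint_t hpow_t
      rwa [hpow_t, ← mul_assoc]
  obtain ⟨t, hlim, ht⟩ := hcluster.exists_seq_tendsto
  refine ⟨t, ht, ?_⟩
  have hlim_pow := hlim.rpow_const (p := (1 - ε) / 2) (.inr hb0.le)
  rw [Real.zero_rpow hb0.ne'] at hlim_pow
  exact hlim_pow.congr' (ht.eventually hpow)

/-- Gronwall-type lemma (Lemma 5.4 / L38.2): if `θ : [0,∞) → [0,∞)` has uniformly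
bounded derivative and `∫₀ᵗ θ² ≤ C₁ + C₂ t^ε θ(t)^{1-ε}` for `t > T`, then there is a
sequence `tᵢ → ∞` with `tᵢ^ε θ(tᵢ)^{1-ε} → 0`. -/
theorem stmt0 (θ : ℝ → ℝ) (K : ℝ) (hK : 0 < K)
    (hθdiff : Differentiable ℝ θ)
    (hθnonneg : ∀ t, 0 ≤ t → 0 ≤ θ t)
    (hθderiv : ∀ t, 0 ≤ t → |deriv θ t| ≤ K)
    (ε : ℝ) (hε0 : 0 < ε) (hε1 : ε < 1/3)
    (C₁ C₂ T : ℝ) (hC₁ : 0 ≤ C₁) (hC₂ : 0 ≤ C₂) (hT : 0 < T)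
    (hint : ∀ t, T < t → (∫ τ in (0:ℝ)..t, (θ τ)^2) ≤ C₁ + C₂ * t ^ ε * θ t ^ (1 - ε)) :
    ∃ t : ℕ → ℝ, Tendsto t atTop atTop ∧
      Tendsto (fun i => (t i) ^ ε * θ (t i) ^ (1 - ε)) atTop (nhds 0) := by
  have hsq : Continuous fun t => θ t ^ 2 := hθdiff.continuous.pow 2
  exact stmt0_general (hsq.locallyIntegrable.locallyIntegrableOn _)
    ((eventually_ge_atTop 0).mono hθnonneg) (by linarith) hε1.le ((eventually_gt_atTop T).mono hint)
end

section
/- The rescaled trapping term for the potential has a negative limit at infinity: r³·(2V(r) + r⋆(r)·F(r)·(dV/dr)(r)) → −2M as r → ∞. (Here 2V + ρ⋆V′ is the trapping term, with V′ the derivative of V with respect to the tortoise coordinate; the limiting value −2M corrects a dropped factor of 2 in the paper's stated value −M.) -/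
/-!
The tortoise coordinate differs from `r` only by logarithms and constants, so `r⋆ ∼ r` at infinity.
As `F → 1`, `r³ V → 2M` and `r⁴ dV/dr → -6M`, splitting the rescaled trapping term as
`2 (r³ V) + (r⋆ / r) F (r⁴ dV/dr)` yields the limit `4M - 6M = -2M`.
-/

open Filter

open scoped Topology Asymptotics

theorem isLittleO_log_sub_div_id_atTop (a : ℝ) {c : ℝ} (hc : 0 < c) :
    (fun r : ℝ => Real.log ((r - a) / c)) =o[atTop] (id : ℝ → ℝ) := by
  have affine_atTop : Tendsto (fun r : ℝ => (r - a) / c) atTop atTop :=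
    (tendsto_atTop_add_const_right atTop (-a) tendsto_id).atTop_div_const hc
  have affine_isBigO : (fun r : ℝ => (r - a) / c) =O[atTop] (id : ℝ → ℝ) := by
    have const_isBigO := (Asymptotics.isLittleO_const_id_atTop (E'' := ℝ) a).isBigO
    simpa only [div_eq_inv_mul, id] using
      ((Asymptotics.isBigO_refl id atTop).sub const_isBigO).const_mul_left c⁻¹
  exact (Real.isLittleO_log_id_atTop.comp_tendsto affine_atTop).trans_isBigO affine_isBigO

theorem isEquivalent_add_log_sub_log_add_const_id_atTop (A B a b C : ℝ) {c : ℝ} (hc : 0 < c) :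
    (fun r : ℝ => r + A * Real.log ((r - a) / c) - B * Real.log ((r - b) / c) + C)
      ~[atTop] (id : ℝ → ℝ) := by
  have log_a := (isLittleO_log_sub_div_id_atTop a hc).const_mul_left A
  have log_b := (isLittleO_log_sub_div_id_atTop b hc).const_mul_left B
  have const := Asymptotics.isLittleO_const_id_atTop (E'' := ℝ) C
  refine ((log_a.sub log_b).add const).congr_left fun r => ?_
  simp only [Pi.sub_apply, id]
  ring

theorem tendsto_atTop_of_eq_comp_inv {X : Type*} [TopologicalSpace X] {f g : ℝ → X}
    (hg : ContinuousAt g 0) (hfg : ∀ r, 0 < r → f r = g r⁻¹) : Tendsto f atTop (𝓝 (g 0)) := by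
  refine (hg.tendsto.comp tendsto_inv_atTop_zero).congr' ?_
  filter_upwards [eventually_gt_atTop 0] with r hr using (hfg r hr).symm

theorem tendsto_pow_three_mul_trapping {F V V' ρ : ℝ → ℝ} {l v v' : ℝ}
    (hF : Tendsto F atTop (𝓝 l))
    (hV : Tendsto (fun r => r ^ 3 * V r) atTop (𝓝 v))
    (hV' : Tendsto (fun r => r ^ 4 * V' r) atTop (𝓝 v'))
    (hρ : ρ ~[atTop] id) :
    Tendsto (fun r => r ^ 3 * (2 * V r + ρ r * F r * V' r)) atTop (𝓝 (2 * v + l * v')) := by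
  have ρ_div : Tendsto (fun r => ρ r / r) atTop (𝓝 1) :=
    (Asymptotics.isEquivalent_iff_tendsto_one (eventually_ne_atTop 0)).mp hρ
  have split_limit := (hV.const_mul 2).add ((ρ_div.mul hF).mul hV')
  rw [one_mul] at split_limit
  refine split_limit.congr' ?_
  filter_upwards [eventually_ne_atTop 0] with r hr
  field_simp

namespace ReissnerNordstrom

/-- The metric coefficient `F` of the Reissner–Nordström metric of mass `M` and charge `Q`. -/
noncomputable def lapse (M Q r : ℝ) : ℝ :=
  1 - 2 * M / r + Q ^ 2 / r ^ 2

/-- The potential `V = r⁻¹ F F'` whose trapping term is studied, with `F'` written out. -/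
noncomputable def potential (M Q r : ℝ) : ℝ :=
  r⁻¹ * lapse M Q r * (2 * M / r ^ 2 - 2 * Q ^ 2 / r ^ 3)

/-- The polynomial `P_Q` in the numerator of `dV/dr`. -/
def potentialPoly (M Q r : ℝ) : ℝ :=
  3 * M * r ^ 3 - 4 * (Q ^ 2 + 2 * M ^ 2) * r ^ 2 + 15 * M * Q ^ 2 * r - 6 * Q ^ 4

/-- The closed form `-2 r⁻⁷ P_Q(r)` of the radial derivative `dV/dr`; the derivative of `V` in the
tortoise coordinate is `F` times it. -/
noncomputable def potentialDeriv (M Q r : ℝ) : ℝ :=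
  -2 / r ^ 7 * potentialPoly M Q r

variable (M Q : ℝ)

theorem tendsto_lapse_atTop : Tendsto (lapse M Q) atTop (𝓝 1) := by
  let g : ℝ → ℝ := fun u => 1 - 2 * M * u + Q ^ 2 * u ^ 2
  have hg : ContinuousAt g 0 := by fun_prop
  have lapse_eq (r : ℝ) (_ : 0 < r) : lapse M Q r = g r⁻¹ := by
    simp only [lapse, g, div_eq_mul_inv, inv_pow]
  simpa [g] using tendsto_atTop_of_eq_comp_inv hg lapse_eq

theorem tendsto_pow_three_mul_potential_atTop :
    Tendsto (fun r => r ^ 3 * potential M Q r) atTop (𝓝 (2 * M)) := by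
  let g : ℝ → ℝ := fun u => 2 * M - 2 * Q ^ 2 * u
  have hg : ContinuousAt g 0 := by fun_prop
  have slope_limit : Tendsto (fun r => r ^ 2 * (2 * M / r ^ 2 - 2 * Q ^ 2 / r ^ 3)) atTop
      (𝓝 (g 0)) :=
    tendsto_atTop_of_eq_comp_inv hg fun r hr => by simp only [g]; field_simp
  have product_limit := (tendsto_lapse_atTop M Q).mul slope_limit
  simp only [g, mul_zero, sub_zero, one_mul] at product_limit
  refine product_limit.congr' ?_
  filter_upwards [eventually_ne_atTop 0] with r hr
  simp only [potential]
  field_simp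

theorem tendsto_pow_four_mul_potentialDeriv_atTop :
    Tendsto (fun r => r ^ 4 * potentialDeriv M Q r) atTop (𝓝 (-6 * M)) := by
  let g : ℝ → ℝ := fun u =>
    -2 * (3 * M - 4 * (Q ^ 2 + 2 * M ^ 2) * u + 15 * M * Q ^ 2 * u ^ 2 - 6 * Q ^ 4 * u ^ 3)
  have hg : ContinuousAt g 0 := by fun_prop
  have g_zero : g 0 = -6 * M := by simp only [g]; ring
  rw [← g_zero]
  refine tendsto_atTop_of_eq_comp_inv hg fun r hr => ?_
  simp only [potentialDeriv, potentialPoly, g]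
  field_simp

end ReissnerNordstrom

open ReissnerNordstrom in
theorem stmt9_general (M Q : ℝ) {ρ : ℝ → ℝ} (hρ : ρ ~[atTop] id) :
    Tendsto (fun r => r ^ 3 * (2 * potential M Q r + ρ r * lapse M Q r * potentialDeriv M Q r))
      atTop (𝓝 (-2 * M)) := by
  have limit_eq : 2 * (2 * M) + 1 * (-6 * M) = -2 * M := by ring
  rw [← limit_eq]
  exact tendsto_pow_three_mul_trapping (tendsto_lapse_atTop M Q)
    (tendsto_pow_three_mul_potential_atTop M Q) (tendsto_pow_four_mul_potentialDeriv_atTop M Q) hρ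

/-- Subcritical Reissner–Nordström: the rescaled trapping term for the potential has
limit `−2M` at infinity: `r³·(2V(r) + r⋆(r)·F(r)·(dV/dr)(r)) → −2M` as `r → ∞`. -/
theorem stmt9 (M Q : ℝ) (hM : 0 < M) (hQ : Q^2 < M^2) (Cstar : ℝ)
    (rp rm : ℝ) (hrp : rp = M + Real.sqrt (M^2 - Q^2)) (hrm : rm = M - Real.sqrt (M^2 - Q^2))
    (F V rstar PQ dVdr : ℝ → ℝ)
    (hF : ∀ r, F r = 1 - 2*M/r + Q^2/r^2)
    (hV : ∀ r, V r = r⁻¹ * F r * (2*M/r^2 - 2*Q^2/r^3))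
    (hrstar : ∀ r, rstar r = r + rp^2/(rp - rm) * Real.log ((r - rp)/M)
        - rm^2/(rp - rm) * Real.log ((r - rm)/M) + Cstar)
    (hPQ : ∀ r, PQ r = 3*M*r^3 - 4*(Q^2 + 2*M^2)*r^2 + 15*M*Q^2*r - 6*Q^4)
    (hdV : ∀ r, dVdr r = -2/r^7 * PQ r) :
    Tendsto (fun r => r^3 * (2 * V r + rstar r * F r * dVdr r)) atTop (nhds (-2*M)) := by
  simp only [hV, hF, hdV, hPQ, funext hrstar]
  exact stmt9_general M Q (isEquivalent_add_log_sub_log_add_const_id_atTop _ _ rp rm Cstar hM)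
end

section
/- In the subcritical case the trapping term for the angular potential is negative far from the photon sphere: there exists ρ₀ > 0 such that for every r > r₊ with |r⋆(r)| > ρ₀, one has 2V_L(r) + r⋆(r)·F(r)·(dV_L/dr)(r) < 0. -/
/-!
Since `2V_L + r⋆ F V_L' = -(2F/r⁵) (r⋆ P - r³)` with `P(r) = r² - 3Mr + 2Q²` and `F > 0` outside the
horizon, the claim is `r³ < r⋆ P`. Near infinity `r⋆ - r` grows like `2M log r`, which beats the
correction `-3M` coming from `P / r = r - 3M + o(1)`; near the horizon `r⋆ → -∞` while `P(r₊) < 0`.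
Hence `r⋆ P - r³ → +∞` at both ends, and `r⋆` is bounded on the compact interval in between.
-/

namespace ReissnerNordstrom

open Filter Set Topology

theorem exists_pos_forall_lt_norm_of_eventually {α E : Type*} [LinearOrder α] [TopologicalSpace α]
    [OrderTopology α] [CompactIccSpace α] [NoMaxOrder α] [SeminormedAddGroup E] {f : α → E} {a : α}
    {p : α → Prop} (hf : ContinuousOn f (Ioi a)) (ha : ∀ᶠ x in 𝓝[>] a, p x)
    (htop : ∀ᶠ x in atTop, p x) : ∃ ρ > 0, ∀ x, a < x → ρ < ‖f x‖ → p x := by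
  have : Nonempty α := ⟨a⟩
  obtain ⟨u, hau, hu⟩ := mem_nhdsGT_iff_exists_Ioo_subset.mp ha
  obtain ⟨R, hR⟩ := eventually_atTop.mp htop
  have hIcc : Icc u R ⊆ Ioi a := fun x hx ↦ lt_of_lt_of_le hau hx.1
  obtain ⟨B, hB⟩ := isCompact_Icc.exists_bound_of_continuousOn (hf.mono hIcc)
  refine ⟨max B 1, by positivity, fun x hax hx ↦ ?_⟩
  rcases lt_or_ge x u with hxu | hux
  · exact hu ⟨hax, hxu⟩
  rcases le_or_gt R x with hRx | hxR
  · exact hR x hRx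
  · exact absurd (hB x ⟨hux, hxR.le⟩) (not_le.mpr ((le_max_left B 1).trans_lt hx))

theorem tendsto_mul_log_sub_mul_log_atTop {a b c : ℝ} (hab : b < a) (hc : c ≠ 0) (x y : ℝ) :
    Tendsto (fun r ↦ a * Real.log ((r - x) / c) - b * Real.log ((r - y) / c)) atTop atTop := by
  have hshift (z : ℝ) : Tendsto (fun r ↦ Real.log (r - z) - Real.log r) atTop (𝓝 0) := by
    simpa only [sub_eq_add_neg] using Real.tendsto_log_comp_add_sub_log (-z)
  have hmain : Tendsto (fun r ↦ (a - b) * Real.log r) atTop atTop :=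
    Real.tendsto_log_atTop.const_mul_atTop (sub_pos.mpr hab)
  have herror := (((hshift x).const_mul a).sub ((hshift y).const_mul b)).sub_const
    ((a - b) * Real.log c)
  refine (hmain.atTop_add herror).congr' ?_
  filter_upwards [eventually_gt_atTop x, eventually_gt_atTop y] with r hx hy
  rw [Real.log_div (sub_pos.mpr hx).ne' hc, Real.log_div (sub_pos.mpr hy).ne' hc]
  ring

theorem tendsto_log_sub_div_nhdsGT {c : ℝ} (hc : c ≠ 0) (x : ℝ) :
    Tendsto (fun r ↦ Real.log ((r - x) / c)) (𝓝[>] x) atBot := by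
  refine Real.tendsto_log_nhdsNE_zero.comp (tendsto_nhdsWithin_iff.mpr ⟨?_, ?_⟩)
  · have hcont : Continuous fun r : ℝ ↦ (r - x) / c := by fun_prop
    simpa only [sub_self, zero_div] using (hcont.tendsto x).mono_left nhdsWithin_le_nhds
  · filter_upwards [self_mem_nhdsWithin] with r hr
    exact div_ne_zero (sub_pos.mpr hr).ne' hc

/-- The metric coefficient `F = 1 - 2M/r + Q²/r²` of the Reissner–Nordström metric. -/
noncomputable def metricCoeff (M Q r : ℝ) : ℝ := 1 - 2 * M / r + Q ^ 2 / r ^ 2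

/-- The radius `r₊` of the event horizon, the larger root of `r² F`. -/
noncomputable def outerHorizon (M Q : ℝ) : ℝ := M + √(M ^ 2 - Q ^ 2)

/-- The radius `r₋` of the Cauchy horizon, the smaller root of `r² F`. -/
noncomputable def innerHorizon (M Q : ℝ) : ℝ := M - √(M ^ 2 - Q ^ 2)

/-- The tortoise coordinate `r⋆`, an antiderivative of `1 / F` outside the event horizon, with
integration constant `C`. -/
noncomputable def tortoise (M Q C r : ℝ) : ℝ :=
  r + outerHorizon M Q ^ 2 / (outerHorizon M Q - innerHorizon M Q) *
      Real.log ((r - outerHorizon M Q) / M)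
    - innerHorizon M Q ^ 2 / (outerHorizon M Q - innerHorizon M Q) *
      Real.log ((r - innerHorizon M Q) / M) + C

/-- The angular potential `V_L = F / r²`. -/
noncomputable def angularPotential (M Q r : ℝ) : ℝ := metricCoeff M Q r / r ^ 2

/-- The polynomial `r² - 3Mr + 2Q²`, whose larger root is the radius of the photon sphere. -/
def photonPolynomial (M Q r : ℝ) : ℝ := r ^ 2 - 3 * M * r + 2 * Q ^ 2

/-- The derivative `dV_L/dr` of the angular potential, in closed form. -/
noncomputable def angularPotentialDeriv (M Q r : ℝ) : ℝ := -2 / r ^ 5 * photonPolynomial M Q r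

variable {M Q : ℝ}

theorem outerHorizon_pos (hM : 0 < M) : 0 < outerHorizon M Q :=
  add_pos_of_pos_of_nonneg hM (Real.sqrt_nonneg _)

theorem innerHorizon_le_outerHorizon (M Q : ℝ) : innerHorizon M Q ≤ outerHorizon M Q := by
  unfold innerHorizon outerHorizon
  linarith [Real.sqrt_nonneg (M ^ 2 - Q ^ 2)]

theorem innerHorizon_lt_outerHorizon (hQ : Q ^ 2 < M ^ 2) :
    innerHorizon M Q < outerHorizon M Q := by
  unfold innerHorizon outerHorizon
  linarith [Real.sqrt_pos.mpr (sub_pos.mpr hQ)]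

theorem outerHorizon_add_innerHorizon (M Q : ℝ) :
    outerHorizon M Q + innerHorizon M Q = 2 * M := by
  unfold outerHorizon innerHorizon
  ring

theorem outerHorizon_mul_innerHorizon (hQ : Q ^ 2 ≤ M ^ 2) :
    outerHorizon M Q * innerHorizon M Q = Q ^ 2 := by
  unfold outerHorizon innerHorizon
  linear_combination -Real.sq_sqrt (sub_nonneg.mpr hQ)

theorem metricCoeff_eq_mul_div (hQ : Q ^ 2 ≤ M ^ 2) {r : ℝ} (hr : r ≠ 0) :
    metricCoeff M Q r = (r - outerHorizon M Q) * (r - innerHorizon M Q) / r ^ 2 := by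
  rw [metricCoeff, ← outerHorizon_add_innerHorizon M Q, ← outerHorizon_mul_innerHorizon hQ]
  field_simp
  ring

theorem metricCoeff_pos (hM : 0 < M) (hQ : Q ^ 2 ≤ M ^ 2) {r : ℝ} (hr : outerHorizon M Q < r) :
    0 < metricCoeff M Q r := by
  have hr0 : 0 < r := (outerHorizon_pos hM).trans hr
  have houter : 0 < r - outerHorizon M Q := sub_pos.mpr hr
  have hinner : 0 < r - innerHorizon M Q :=
    sub_pos.mpr ((innerHorizon_le_outerHorizon M Q).trans_lt hr)
  rw [metricCoeff_eq_mul_div hQ hr0.ne']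
  exact div_pos (mul_pos houter hinner) (pow_pos hr0 2)

theorem photonPolynomial_outerHorizon_neg (hM : 0 < M) (hQ : Q ^ 2 < M ^ 2) :
    photonPolynomial M Q (outerHorizon M Q) < 0 := by
  have heq : photonPolynomial M Q (outerHorizon M Q) =
      -(outerHorizon M Q * (outerHorizon M Q - innerHorizon M Q) / 2) := by
    unfold photonPolynomial
    linear_combination 3 / 2 * outerHorizon M Q * outerHorizon_add_innerHorizon M Q
      - 2 * outerHorizon_mul_innerHorizon hQ.le
  rw [heq, neg_lt_zero]
  exact half_pos (mul_pos (outerHorizon_pos hM) (sub_pos.mpr (innerHorizon_lt_outerHorizon hQ)))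

theorem continuous_photonPolynomial (M Q : ℝ) : Continuous (photonPolynomial M Q) := by
  unfold photonPolynomial
  fun_prop

theorem two_mul_angularPotential_add_neg_iff {r : ℝ} (hr : 0 < r) (hF : 0 < metricCoeff M Q r)
    (x : ℝ) :
    2 * angularPotential M Q r + x * metricCoeff M Q r * angularPotentialDeriv M Q r < 0 ↔
      0 < x * photonPolynomial M Q r - r ^ 3 := by
  have hfactor :
      2 * angularPotential M Q r + x * metricCoeff M Q r * angularPotentialDeriv M Q r =
        -(2 * metricCoeff M Q r / r ^ 5 * (x * photonPolynomial M Q r - r ^ 3)) := by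
    unfold angularPotential angularPotentialDeriv
    field_simp
    ring
  rw [hfactor, neg_lt_zero]
  exact mul_pos_iff_of_pos_left (by positivity)

theorem continuousOn_tortoise (hM : M ≠ 0) (C : ℝ) :
    ContinuousOn (tortoise M Q C) (Ioi (outerHorizon M Q)) := by
  have hlog {x : ℝ} (hx : x ≤ outerHorizon M Q) :
      ContinuousOn (fun r ↦ Real.log ((r - x) / M)) (Ioi (outerHorizon M Q)) :=
    ContinuousOn.log (by fun_prop) fun r hr ↦ div_ne_zero (sub_pos.mpr (hx.trans_lt hr)).ne' hM
  have houter := hlog le_rfl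
  have hinner := hlog (innerHorizon_le_outerHorizon M Q)
  unfold tortoise
  fun_prop

theorem tendsto_tortoise_sub_self_atTop (hM : 0 < M) (hQ : Q ^ 2 < M ^ 2) (C : ℝ) :
    Tendsto (fun r ↦ tortoise M Q C r - r) atTop atTop := by
  have hgap : 0 < outerHorizon M Q - innerHorizon M Q :=
    sub_pos.mpr (innerHorizon_lt_outerHorizon hQ)
  have hsum : 0 < outerHorizon M Q + innerHorizon M Q := by
    rw [outerHorizon_add_innerHorizon]
    positivity
  have hcoeff : innerHorizon M Q ^ 2 / (outerHorizon M Q - innerHorizon M Q) <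
      outerHorizon M Q ^ 2 / (outerHorizon M Q - innerHorizon M Q) := by
    gcongr ?_ / _
    nlinarith [mul_pos hsum hgap]
  refine (tendsto_atTop_add_const_right _ C (tendsto_mul_log_sub_mul_log_atTop hcoeff hM.ne'
    (outerHorizon M Q) (innerHorizon M Q))).congr fun r ↦ ?_
  unfold tortoise
  ring

theorem tendsto_tortoise_nhdsGT_outerHorizon (hM : 0 < M) (hQ : Q ^ 2 < M ^ 2) (C : ℝ) :
    Tendsto (tortoise M Q C) (𝓝[>] outerHorizon M Q) atBot := by
  have hgap : 0 < outerHorizon M Q - innerHorizon M Q :=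
    sub_pos.mpr (innerHorizon_lt_outerHorizon hQ)
  have houter : 0 < outerHorizon M Q ^ 2 / (outerHorizon M Q - innerHorizon M Q) :=
    div_pos (pow_pos (outerHorizon_pos hM) 2) hgap
  have hregular : ContinuousAt (fun r ↦ r
      - innerHorizon M Q ^ 2 / (outerHorizon M Q - innerHorizon M Q) *
        Real.log ((r - innerHorizon M Q) / M) + C) (outerHorizon M Q) := by
    have harg : (outerHorizon M Q - innerHorizon M Q) / M ≠ 0 := (div_pos hgap hM).ne'
    fun_prop (disch := assumption)
  refine (((tendsto_log_sub_div_nhdsGT hM.ne' (outerHorizon M Q)).const_mul_atBot houter).atBot_add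
    (hregular.tendsto.mono_left nhdsWithin_le_nhds)).congr fun r ↦ ?_
  unfold tortoise
  ring

theorem tendsto_tortoise_mul_photonPolynomial_sub_pow_atTop (hM : 0 < M) (hQ : Q ^ 2 < M ^ 2)
    (C : ℝ) :
    Tendsto (fun r ↦ tortoise M Q C r * photonPolynomial M Q r - r ^ 3) atTop atTop := by
  have hinv : Tendsto (fun r : ℝ ↦ r⁻¹) atTop (𝓝 0) := tendsto_inv_atTop_zero
  have hleading : Tendsto (fun r ↦ 1 - 3 * M * r⁻¹ + 2 * Q ^ 2 * r⁻¹ ^ 2) atTop (𝓝 1) := by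
    simpa using ((hinv.const_mul (3 * M)).const_sub 1).add ((hinv.pow 2).const_mul (2 * Q ^ 2))
  have hcorrection : Tendsto (fun r ↦ -(3 * M) + 2 * Q ^ 2 * r⁻¹) atTop (𝓝 (-(3 * M))) := by
    simpa using (hinv.const_mul (2 * Q ^ 2)).const_add (-(3 * M))
  have hscaled : Tendsto (fun r ↦ (tortoise M Q C r - r) *
      (1 - 3 * M * r⁻¹ + 2 * Q ^ 2 * r⁻¹ ^ 2) + (-(3 * M) + 2 * Q ^ 2 * r⁻¹)) atTop atTop :=
    ((tendsto_tortoise_sub_self_atTop hM hQ C).atTop_mul_pos one_pos hleading).atTop_add hcorrection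
  refine ((tendsto_pow_atTop two_ne_zero).atTop_mul_atTop₀ hscaled).congr' ?_
  filter_upwards [eventually_ne_atTop 0] with r hr
  unfold photonPolynomial
  field_simp
  ring

theorem tendsto_tortoise_mul_photonPolynomial_sub_pow_nhdsGT (hM : 0 < M) (hQ : Q ^ 2 < M ^ 2)
    (C : ℝ) :
    Tendsto (fun r ↦ tortoise M Q C r * photonPolynomial M Q r - r ^ 3)
      (𝓝[>] outerHorizon M Q) atTop := by
  have hproduct : Tendsto (fun r ↦ tortoise M Q C r * photonPolynomial M Q r)
      (𝓝[>] outerHorizon M Q) atTop :=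
    (tendsto_tortoise_nhdsGT_outerHorizon hM hQ C).atBot_mul_neg
      (photonPolynomial_outerHorizon_neg hM hQ)
      (((continuous_photonPolynomial M Q).tendsto _).mono_left nhdsWithin_le_nhds)
  have hcube : Tendsto (fun r : ℝ ↦ -r ^ 3) (𝓝[>] outerHorizon M Q)
      (𝓝 (-outerHorizon M Q ^ 3)) :=
    ((continuous_pow 3).neg.tendsto _).mono_left nhdsWithin_le_nhds
  simpa only [sub_eq_add_neg] using hproduct.atTop_add hcube

end ReissnerNordstrom

open ReissnerNordstrom


/-- Subcritical Reissner–Nordström: the trapping term for the angular potential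
`V_L = F/r²` is negative far from the photon sphere: there is `ρ₀ > 0` so that
`2V_L + r⋆·F·(dV_L/dr) < 0` whenever `r > r₊` and `|r⋆(r)| > ρ₀`. -/
theorem stmt11 (M Q : ℝ) (hM : 0 < M) (hQ : Q^2 < M^2) (Cstar : ℝ)
    (rp rm : ℝ) (hrp : rp = M + Real.sqrt (M^2 - Q^2)) (hrm : rm = M - Real.sqrt (M^2 - Q^2))
    (F VL rstar dVLdr : ℝ → ℝ)
    (hF : ∀ r, F r = 1 - 2*M/r + Q^2/r^2)
    (hVL : ∀ r, VL r = F r / r^2)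
    (hrstar : ∀ r, rstar r = r + rp^2/(rp - rm) * Real.log ((r - rp)/M)
        - rm^2/(rp - rm) * Real.log ((r - rm)/M) + Cstar)
    (hdVL : ∀ r, dVLdr r = -2/r^5 * (r^2 - 3*M*r + 2*Q^2)) :
    ∃ ρ₀ > 0, ∀ r, rp < r → ρ₀ < |rstar r| →
      2 * VL r + rstar r * F r * dVLdr r < 0 := by
  obtain rfl : rp = outerHorizon M Q := hrp
  obtain rfl : rm = innerHorizon M Q := hrm
  obtain rfl : F = metricCoeff M Q := funext hF
  obtain rfl : VL = angularPotential M Q := funext hVL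
  obtain rfl : rstar = tortoise M Q Cstar := funext hrstar
  obtain rfl : dVLdr = angularPotentialDeriv M Q := funext hdVL
  obtain ⟨ρ₀, hρ₀, htrap⟩ := exists_pos_forall_lt_norm_of_eventually
    (continuousOn_tortoise hM.ne' Cstar)
    ((tendsto_tortoise_mul_photonPolynomial_sub_pow_nhdsGT hM hQ Cstar).eventually_gt_atTop 0)
    ((tendsto_tortoise_mul_photonPolynomial_sub_pow_atTop hM hQ Cstar).eventually_gt_atTop 0)
  refine ⟨ρ₀, hρ₀, fun r hr hρ ↦ ?_⟩
  have hr0 : 0 < r := (outerHorizon_pos hM).trans hr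
  exact (two_mul_angularPotential_add_neg_iff hr0 (metricCoeff_pos hM hQ.le hr) _).mpr
    (htrap r hr hρ)
end

section
/- In the critical case, the rescaled trapping term for the potential has limit −M at the horizon: (r⁴ / (2F(r)(r − M)))·(2V(r) + r⋆(r)·F(r)·(dV/dr)(r)) → −M as r → M from the right. -/
/-!
At the horizon `r⋆` has a simple pole, whose residue is `-M²`, and a logarithm that is negligible
against it, so `(r - M) r⋆ → -M²`. In the rescaled trapping term `F` cancels: the potential
contributes exactly `2M`, and its derivative, which vanishes to second order at `r = M`, contributes
`-3M(r - 2M)/r³ · (r - M) r⋆ → -3M`.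
-/

open Filter

open scoped Topology

/-- The tortoise coordinate `r⋆` of the extremal Reissner–Nordström exterior of mass `M`, with
integration constant `C`. It is a total function on `ℝ`, meaningful for `0 < M < r`. -/
noncomputable def extremalTortoise (M C r : ℝ) : ℝ :=
  r + 2 * M * Real.log ((r - M) / M) - M ^ 2 / (r - M) + C

theorem tendsto_mul_log_div_nhds_zero {b : ℝ} (hb : b ≠ 0) :
    Tendsto (fun x : ℝ => x * Real.log (x / b)) (𝓝 0) (𝓝 0) := by
  have hcont : Continuous fun x : ℝ => b * (x / b * Real.log (x / b)) :=
    continuous_const.mul (Real.continuous_mul_log.comp (continuous_id.div_const b))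
  simpa [← mul_assoc, mul_div_cancel₀, hb] using hcont.tendsto 0

theorem tendsto_sub_mul_extremalTortoise {M : ℝ} (hM : M ≠ 0) (C : ℝ) :
    Tendsto (fun r => (r - M) * extremalTortoise M C r) (𝓝[≠] M) (𝓝 (-M ^ 2)) := by
  have hsub : Tendsto (fun r : ℝ => r - M) (𝓝 M) (𝓝 0) :=
    tendsto_sub_nhds_zero_iff.mpr tendsto_id
  have hregular : Tendsto (fun r : ℝ => (r - M) * (r + C)) (𝓝 M) (𝓝 0) := by
    simpa using hsub.mul (tendsto_id.add_const C)
  have hlog : Tendsto (fun r : ℝ => 2 * M * ((r - M) * Real.log ((r - M) / M))) (𝓝 M) (𝓝 0) := by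
    simpa using ((tendsto_mul_log_div_nhds_zero hM).comp hsub).const_mul (2 * M)
  have hsum := ((hregular.add hlog).sub_const (M ^ 2)).mono_left
    (nhdsWithin_le_nhds (s := {M}ᶜ))
  rw [add_zero, zero_sub] at hsum
  refine hsum.congr' ?_
  filter_upwards [self_mem_nhdsWithin] with r hr
  have hrM : r - M ≠ 0 := sub_ne_zero.mpr hr
  have hpole : (r - M) * (M ^ 2 / (r - M)) = M ^ 2 := mul_div_cancel₀ _ hrM
  unfold extremalTortoise
  linear_combination hpole

section Algebra

variable {K : Type*} [Field K] [NeZero (2 : K)] {M r f : K}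

theorem rescaled_potential_eq (hr : r ≠ 0) (hrM : r - M ≠ 0) (hf : f ≠ 0) :
    r ^ 4 / (2 * f * (r - M)) * (2 * (r⁻¹ * f * (2 * M / r ^ 2 - 2 * M ^ 2 / r ^ 3))) =
      2 * M := by
  have h2 : (2 : K) ≠ 0 := two_ne_zero
  field_simp

theorem rescaled_potential_deriv_eq (hr : r ≠ 0) (hrM : r - M ≠ 0) (hf : f ≠ 0) (s : K) :
    r ^ 4 / (2 * f * (r - M)) *
        (s * f * (-2 / r ^ 7 * (3 * M * (r - M) ^ 2 * (r - 2 * M)))) =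
      -(3 * M * (r - 2 * M) / r ^ 3 * ((r - M) * s)) := by
  have h2 : (2 : K) ≠ 0 := two_ne_zero
  field_simp

end Algebra

theorem tendsto_rescaled_trapping {M L : ℝ} {f s : ℝ → ℝ} {l : Filter ℝ} (hM : M ≠ 0)
    (hl : l ≤ 𝓝[≠] M) (hf : ∀ᶠ r in l, f r ≠ 0)
    (hs : Tendsto (fun r => (r - M) * s r) l (𝓝 L)) :
    Tendsto (fun r => r ^ 4 / (2 * f r * (r - M)) *
        (2 * (r⁻¹ * f r * (2 * M / r ^ 2 - 2 * M ^ 2 / r ^ 3)) +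
          s r * f r * (-2 / r ^ 7 * (3 * M * (r - M) ^ 2 * (r - 2 * M)))))
      l (𝓝 (2 * M + 3 / M * L)) := by
  have hlM : l ≤ 𝓝 M := hl.trans nhdsWithin_le_nhds
  have hcoeff : Tendsto (fun r : ℝ => 3 * M * (r - 2 * M) / r ^ 3) l (𝓝 (-(3 / M))) := by
    have hcont : ContinuousAt (fun r : ℝ => 3 * M * (r - 2 * M) / r ^ 3) M :=
      ContinuousAt.div (by fun_prop) (by fun_prop) (pow_ne_zero 3 hM)
    have hval : 3 * M * (M - 2 * M) / M ^ 3 = -(3 / M) := by field_simp; ring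
    exact hval ▸ hcont.tendsto.mono_left hlM
  have hlim := (hcoeff.mul hs).neg.const_add (2 * M)
  rw [neg_mul, neg_neg] at hlim
  refine hlim.congr' ?_
  filter_upwards [hf, hl self_mem_nhdsWithin, hlM (isOpen_ne.mem_nhds hM)] with r hfr hrM hr
  have hrM' : r - M ≠ 0 := sub_ne_zero.mpr hrM
  rw [mul_add, rescaled_potential_eq hr hrM' hfr, rescaled_potential_deriv_eq hr hrM' hfr]

/-- Critical (extremal) Reissner–Nordström: the rescaled trapping term for the
potential has limit `−M` at the horizon:
`(r⁴/(2F(r)(r−M)))·(2V(r) + r⋆(r)·F(r)·(dV/dr)(r)) → −M` as `r → M⁺`. -/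
theorem stmt12 (M : ℝ) (hM : 0 < M) (Cstar : ℝ)
    (F V rstar PM dVdr : ℝ → ℝ)
    (hF : ∀ r, F r = (1 - M/r)^2)
    (hV : ∀ r, V r = r⁻¹ * F r * (2*M/r^2 - 2*M^2/r^3))
    (hrstar : ∀ r, rstar r = r + 2*M*Real.log ((r - M)/M) - M^2/(r - M) + Cstar)
    (hPM : ∀ r, PM r = 3*M*(r - M)^2*(r - 2*M))
    (hdV : ∀ r, dVdr r = -2/r^7 * PM r) :
    Tendsto (fun r => (r^4 / (2 * F r * (r - M))) * (2 * V r + rstar r * F r * dVdr r))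
      (nhdsWithin M (Set.Ioi M)) (nhds (-M)) := by
  have hright : 𝓝[>] M ≤ 𝓝[≠] M := nhdsGT_le_nhdsNE M
  have hF_ne : ∀ᶠ r in 𝓝[>] M, F r ≠ 0 := by
    filter_upwards [self_mem_nhdsWithin] with r hr
    rw [hF]
    exact pow_ne_zero 2 (sub_pos.mpr ((div_lt_one (hM.trans hr)).mpr hr)).ne'
  have hpole : Tendsto (fun r => (r - M) * rstar r) (𝓝[>] M) (𝓝 (-M ^ 2)) := by
    obtain rfl : rstar = extremalTortoise M Cstar := funext hrstar
    exact (tendsto_sub_mul_extremalTortoise hM.ne' Cstar).mono_left hright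
  have hvalue : 2 * M + 3 / M * -M ^ 2 = -M := by field_simp; ring
  simp only [hV, hdV, hPM]
  exact hvalue ▸ tendsto_rescaled_trapping hM.ne' hright hF_ne hpole
end

section
/- For M > 0 and Q ∈ ℝ with Q² ≤ M², the function I(r) = 3Mr − 4(Q² + 2M²) + 15MQ²/r − 6Q⁴/r² is strictly increasing on [2M, ∞). -/
/-!
For `f r = α r - β + γ / r - δ / r²` and `0 < a < b`, the difference `f b - f a` has the sign of
`α p² - γ p + δ s`, where `p = a b` and `s = a + b`. Viewed as a quadratic in `p`, this has
discriminant `γ² - 4 α δ s`, and `s > 2 c` on `[c, ∞)`; so `γ² ≤ 8 α δ c` makes `f` strictly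
increasing there. For the Reissner–Nordström coefficients this condition is an equality at
`c = 25 M / 16`, which is below `2 M`.
-/

section Quadratic

variable {R : Type*} [CommRing R] [LinearOrder R] [IsStrictOrderedRing R]

theorem quadratic_pos_of_sq_lt {α γ κ : R} (hα : 0 < α) (hdisc : γ ^ 2 < 4 * α * κ) (p : R) :
    0 < α * p ^ 2 - γ * p + κ := by
  have complete_square : 4 * α * (α * p ^ 2 - γ * p + κ) =
      (2 * α * p - γ) ^ 2 + (4 * α * κ - γ ^ 2) := by ring
  refine pos_of_mul_pos_right (a := 4 * α) ?_ (by positivity)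
  rw [complete_square]
  exact add_pos_of_nonneg_of_pos (sq_nonneg _) (sub_pos.2 hdisc)

theorem quadratic_pos_of_sq_le_of_lt {α γ δ s t p : R} (hα : 0 < α) (hp : p ≠ 0) (ht : 0 < t)
    (hts : t < s) (hdisc : γ ^ 2 ≤ 4 * α * (δ * t)) : 0 < α * p ^ 2 - γ * p + δ * s := by
  have hδt : 0 ≤ δ * t :=
    nonneg_of_mul_nonneg_right ((sq_nonneg γ).trans hdisc) (by positivity)
  rcases (nonneg_of_mul_nonneg_left hδt ht).eq_or_lt with rfl | hδ
  · have hγ : γ = 0 := by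
      simpa only [zero_mul, mul_zero, sq_nonpos_iff] using hdisc
    rw [hγ, zero_mul, zero_mul, sub_zero, add_zero]
    positivity
  · exact quadratic_pos_of_sq_lt hα (hdisc.trans_lt (by gcongr)) p

end Quadratic

section Laurent

variable {K : Type*} [Field K]

theorem laurent_sub_laurent {α β γ δ a b : K} (ha : a ≠ 0) (hb : b ≠ 0) :
    (α * b - β + γ / b - δ / b ^ 2) - (α * a - β + γ / a - δ / a ^ 2) =
      (b - a) * (α * (a * b) ^ 2 - γ * (a * b) + δ * (a + b)) / (a * b) ^ 2 := by
  field_simp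
  ring

variable [LinearOrder K] [IsStrictOrderedRing K]

theorem strictMonoOn_laurent_Ici {α β γ δ c : K} (hα : 0 < α) (hc : 0 < c)
    (hdisc : γ ^ 2 ≤ 8 * α * δ * c) :
    StrictMonoOn (fun r ↦ α * r - β + γ / r - δ / r ^ 2) (Set.Ici c) := by
  intro a (hca : c ≤ a) b (hcb : c ≤ b) hab
  have ha : 0 < a := hc.trans_le hca
  have hb : 0 < b := hc.trans_le hcb
  have factor_pos : 0 < α * (a * b) ^ 2 - γ * (a * b) + δ * (a + b) :=
    quadratic_pos_of_sq_le_of_lt (t := 2 * c) hα (mul_pos ha hb).ne' (by positivity)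
      (by linarith) (by linarith)
  rw [← sub_pos, laurent_sub_laurent ha.ne' hb.ne']
  have hba : 0 < b - a := sub_pos.2 hab
  positivity

end Laurent

theorem stmt13_general {K : Type*} [Field K] [LinearOrder K] [IsStrictOrderedRing K]
    (M Q : K) (hM : 0 < M) (I : K → K)
    (hI : ∀ r, I r = 3 * M * r - 4 * (Q ^ 2 + 2 * M ^ 2) + 15 * M * Q ^ 2 / r
      - 6 * Q ^ 4 / r ^ 2) :
    StrictMonoOn I (Set.Ici (25 / 16 * M)) := by
  rw [funext hI]
  have hdisc : (15 * M * Q ^ 2) ^ 2 = 8 * (3 * M) * (6 * Q ^ 4) * (25 / 16 * M) := by ring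
  exact strictMonoOn_laurent_Ici (by positivity) (by positivity) hdisc.le

/-- For `M > 0`, `Q² ≤ M²`, the function
`I(r) = 3Mr − 4(Q²+2M²) + 15MQ²/r − 6Q⁴/r²` is strictly increasing on `[2M, ∞)`. -/
theorem stmt13 (M Q : ℝ) (hM : 0 < M) (hQ : Q^2 ≤ M^2)
    (I : ℝ → ℝ)
    (hI : ∀ r, I r = 3*M*r - 4*(Q^2 + 2*M^2) + 15*M*Q^2/r - 6*Q^4/r^2) :
    StrictMonoOn I (Set.Ici (2*M)) :=
  (stmt13_general M Q hM I hI).mono (Set.Ici_subset_Ici.2 (by linarith))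
end

section
/- For M > 0 and Q ∈ ℝ with Q² < M², the cubic P_Q is strictly negative on the interval from the outer horizon to 2M: P_Q(r) < 0 for every r ∈ [r₊, 2M], where r₊ = M + √(M² − Q²). -/
/-!
In terms of the distance `t = r - M` and the gap `σ = M² - Q² > 0`,
`-P_Q(r) = 3M t² (M - t) + σ (7M t - M² - 4t² + 6σ)`.
Outside the outer horizon `σ ≤ t²`, and `t ≤ M` for `r ≤ 2M`, so the first term is at least
`3M σ (M - t)` and the sum at least `2σ (M² + 2t (M - t) + 3σ)`, which is positive.
-/

namespace ReissnerNordstrom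

section CommRing

variable {R : Type*} [CommRing R]

/-- The function `Δ(r) = r² - 2Mr + Q²`, whose largest root is the outer horizon radius in the
subcritical case. -/
def horizonFunction (M Q r : R) : R := r ^ 2 - 2 * M * r + Q ^ 2

/-- The cubic `P_Q(r)` of the Reissner–Nordström solution of mass `M` and charge `Q`. -/
def cubic (M Q r : R) : R :=
  3 * M * r ^ 3 - 4 * (Q ^ 2 + 2 * M ^ 2) * r ^ 2 + 15 * M * Q ^ 2 * r - 6 * Q ^ 4

theorem horizonFunction_eq_sq_sub (M Q r : R) :
    horizonFunction M Q r = (r - M) ^ 2 - (M ^ 2 - Q ^ 2) := by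
  unfold horizonFunction
  ring

theorem cubic_eq_neg_horizonFunction_add (M Q r : R) :
    cubic M Q r =
      -(3 * M * horizonFunction M Q r * (2 * M - r) +
        2 * (M ^ 2 - Q ^ 2) *
          (M ^ 2 + 2 * (r - M) * (2 * M - r) + 3 * (M ^ 2 - Q ^ 2))) := by
  unfold cubic horizonFunction
  ring

end CommRing

theorem horizonFunction_nonneg_of_add_sqrt_le {M Q r : ℝ} (hr : M + √(M ^ 2 - Q ^ 2) ≤ r) :
    0 ≤ horizonFunction M Q r := by
  have gap_le : M ^ 2 - Q ^ 2 ≤ (r - M) ^ 2 :=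
    (Real.sqrt_le_iff.mp (le_sub_iff_add_le'.mpr hr)).2
  rw [horizonFunction_eq_sq_sub]
  exact sub_nonneg.mpr gap_le

theorem cubic_neg_of_horizonFunction_nonneg {R : Type*} [CommRing R] [LinearOrder R]
    [IsStrictOrderedRing R] {M Q r : R} (hQ : Q ^ 2 < M ^ 2) (hMr : M ≤ r) (hr : r ≤ 2 * M)
    (hΔ : 0 ≤ horizonFunction M Q r) : cubic M Q r < 0 := by
  have hM : 0 ≤ M := by linarith
  have gap_pos : 0 < M ^ 2 - Q ^ 2 := sub_pos.mpr hQ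
  have interval_nonneg : 0 ≤ (r - M) * (2 * M - r) :=
    mul_nonneg (sub_nonneg.mpr hMr) (sub_nonneg.mpr hr)
  have horizon_term_nonneg : 0 ≤ 3 * M * horizonFunction M Q r * (2 * M - r) :=
    mul_nonneg (by positivity) (sub_nonneg.mpr hr)
  have gap_factor_pos :
      0 < M ^ 2 + 2 * (r - M) * (2 * M - r) + 3 * (M ^ 2 - Q ^ 2) := by
    linarith [sq_nonneg M]
  rw [cubic_eq_neg_horizonFunction_add, neg_lt_zero]
  exact add_pos_of_nonneg_of_pos horizon_term_nonneg
    (mul_pos (mul_pos two_pos gap_pos) gap_factor_pos)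

end ReissnerNordstrom

/-- Subcritical case: the cubic `P_Q` is strictly negative on `[r₊, 2M]`. -/
theorem stmt14 (M Q : ℝ) (hM : 0 < M) (hQ : Q^2 < M^2)
    (rp : ℝ) (hrp : rp = M + Real.sqrt (M^2 - Q^2))
    (PQ : ℝ → ℝ)
    (hPQ : ∀ r, PQ r = 3*M*r^3 - 4*(Q^2 + 2*M^2)*r^2 + 15*M*Q^2*r - 6*Q^4) :
    ∀ r ∈ Set.Icc rp (2*M), PQ r < 0 := by
  intro r ⟨hrpr, hr2M⟩
  have hr : M + √(M ^ 2 - Q ^ 2) ≤ r := hrp ▸ hrpr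
  have hMr : M ≤ r := (le_add_of_nonneg_right (Real.sqrt_nonneg _)).trans hr
  have hΔ := ReissnerNordstrom.horizonFunction_nonneg_of_add_sqrt_le hr
  exact (hPQ r).trans_lt
    (ReissnerNordstrom.cubic_neg_of_horizonFunction_nonneg hQ hMr hr2M hΔ)
end

section
/- For every σ > 1 there is a constant C > 0, depending only on σ, such that for every b > 0 and every continuously differentiable, compactly supported u : ℝ → ℝ, b³·∫ℝ (1 + b|x|)^{−σ−2}·u(x)² dx ≤ C·( b²·u(0)² + b·∫ℝ (1 + b|x|)^{−σ}·u′(x)² dx ). -/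
open MeasureTheory

/-!
If `g` has positive derivative, integrating `(g ‖u‖²)' = g' ‖u‖² + 2 g ⟪u, u'⟫` over a half-line and
absorbing half of `g' ‖u‖²` by Young's inequality bounds `∫ g' ‖u‖²` by a boundary term and
`∫ (g² / g') ‖u'‖²`. The primitive `g = w ^ p / p` of `w ^ (p - 1)`, with `w = c + b x`, is
increasing whatever the sign of `p ≠ 0` and has `g² / g' = w ^ (p + 1) / (p² b)`. Taking
`c = 1` and `p = -(σ + 1)` on both half-lines gives the weights of the theorem.
-/

open Set Filter
open scoped RealInnerProductSpace

theorem integrableOn_of_continuousOn_of_hasCompactSupport {X F : Type*} [TopologicalSpace X]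
    [MeasurableSpace X] [OpensMeasurableSpace X] [NormedAddCommGroup F]
    {μ : Measure X} [IsFiniteMeasureOnCompacts μ] {s : Set X} {f : X → F}
    (hs : IsClosed s) (hf : ContinuousOn f s) (hfc : HasCompactSupport f) :
    IntegrableOn f s μ := by
  have hK : IsCompact (s ∩ tsupport f) := hfc.isCompact.inter_left hs
  have hKm : MeasurableSet (s ∩ tsupport f) := (hs.inter (isClosed_tsupport f)).measurableSet
  refine ((hf.mono inter_subset_left).integrableOn_compact' hK hKm).of_forall_sdiff_eq_zero
    hs.measurableSet fun x hx => ?_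
  exact image_eq_zero_of_notMem_tsupport fun hxt => hx.2 ⟨hx.1, hxt⟩

theorem integral_comp_abs_mul {φ f : ℝ → ℝ} (h : Integrable fun x => φ |x| * f x) :
    ∫ x, φ |x| * f x = (∫ x in Ioi 0, φ x * f x) + ∫ x in Ioi 0, φ x * f (-x) := by
  have hright : ∫ x in Ioi 0, φ |x| * f x = ∫ x in Ioi 0, φ x * f x :=
    setIntegral_congr_fun measurableSet_Ioi fun x hx => by simp only [abs_of_pos hx.out]
  have hleft : ∫ x in Iic 0, φ |x| * f x = ∫ x in Ioi 0, φ x * f (-x) := by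
    rw [← neg_zero, ← integral_comp_neg_Ioi, neg_zero]
    exact setIntegral_congr_fun measurableSet_Ioi fun x hx => by
      simp only [abs_neg, abs_of_pos hx.out]
  rw [← intervalIntegral.integral_Iic_add_Ioi h.integrableOn h.integrableOn, hleft, hright,
    add_comm]

section NormedAddCommGroup

variable {F : Type*} [NormedAddCommGroup F] {v : ℝ → F}

theorem hasCompactSupport_mul_norm_sq (g : ℝ → ℝ) (hvc : HasCompactSupport v) :
    HasCompactSupport fun x => g x * ‖v x‖ ^ 2 :=
  hvc.mono fun x hx hvx => hx (by simp [hvx])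

theorem integrableOn_Ici_mul_norm_sq {a : ℝ} {g : ℝ → ℝ} (hg : ContinuousOn g (Ici a))
    (hv : Continuous v) (hvc : HasCompactSupport v) :
    IntegrableOn (fun x => g x * ‖v x‖ ^ 2) (Ici a) :=
  integrableOn_of_continuousOn_of_hasCompactSupport isClosed_Ici
    (hg.mul (hv.norm.pow 2).continuousOn) (hasCompactSupport_mul_norm_sq g hvc)

theorem integrable_rpow_abs_mul_norm_sq {b : ℝ} (hb : 0 ≤ b) (q : ℝ) (hv : Continuous v)
    (hvc : HasCompactSupport v) : Integrable fun x => (1 + b * |x|) ^ q * ‖v x‖ ^ 2 := by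
  have hw : Continuous fun x : ℝ => (1 + b * |x|) ^ q :=
    Continuous.rpow_const (by fun_prop) fun x => Or.inl (by positivity)
  exact (hw.mul (hv.norm.pow 2)).integrable_of_hasCompactSupport
    (hasCompactSupport_mul_norm_sq _ hvc)

end NormedAddCommGroup

section Hardy

variable {E : Type*} [NormedAddCommGroup E] [InnerProductSpace ℝ E]

theorem weighted_young_inner (x y : E) {s t : ℝ} (ht : 0 < t) :
    1 / 2 * (t * ‖x‖ ^ 2) - 2 * (s ^ 2 / t * ‖y‖ ^ 2) ≤ t * ‖x‖ ^ 2 + s * (2 * ⟪x, y⟫) := by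
  have hsq : ‖t • x + (2 * s) • y‖ ^ 2 =
      t ^ 2 * ‖x‖ ^ 2 + 4 * s * t * ⟪x, y⟫ + 4 * s ^ 2 * ‖y‖ ^ 2 := by
    rw [norm_add_sq_real, norm_smul, norm_smul, real_inner_smul_left, real_inner_smul_right,
      mul_pow, mul_pow, Real.norm_eq_abs, Real.norm_eq_abs, sq_abs, sq_abs]
    ring
  have hdiff : t * ‖x‖ ^ 2 + s * (2 * ⟪x, y⟫) -
      (1 / 2 * (t * ‖x‖ ^ 2) - 2 * (s ^ 2 / t * ‖y‖ ^ 2)) =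
      ‖t • x + (2 * s) • y‖ ^ 2 / (2 * t) := by
    rw [hsq]
    field_simp
    ring
  exact sub_nonneg.mp (hdiff ▸ by positivity)

section Weight

variable {a : ℝ} {g g' : ℝ → ℝ} {u : ℝ → E}

theorem integrableOn_Ici_deriv_mul_norm_sq
    (hg : ContinuousOn g (Ici a)) (hg' : ContinuousOn g' (Ici a))
    (hu : ContDiff ℝ 1 u) (huc : HasCompactSupport u) :
    IntegrableOn (fun x => g' x * ‖u x‖ ^ 2 + g x * (2 * ⟪u x, deriv u x⟫)) (Ici a) := by
  have hinner : Continuous fun x => 2 * ⟪u x, deriv u x⟫ :=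
    continuous_const.mul (hu.continuous.inner (hu.continuous_deriv le_rfl))
  have hinnerc : HasCompactSupport fun x => 2 * ⟪u x, deriv u x⟫ :=
    huc.mono fun x hx hux => hx (by simp [hux])
  exact (integrableOn_Ici_mul_norm_sq hg' hu.continuous huc).add
    (integrableOn_of_continuousOn_of_hasCompactSupport isClosed_Ici
      (hg.mul hinner.continuousOn) hinnerc.mul_left)

theorem integral_Ioi_deriv_mul_norm_sq
    (hg : ∀ x ∈ Ici a, HasDerivWithinAt g (g' x) (Ici a) x) (hg' : ContinuousOn g' (Ici a))
    (hu : ContDiff ℝ 1 u) (huc : HasCompactSupport u) :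
    ∫ x in Ioi a, (g' x * ‖u x‖ ^ 2 + g x * (2 * ⟪u x, deriv u x⟫)) = -(g a * ‖u a‖ ^ 2) := by
  have hgc : ContinuousOn g (Ici a) := fun x hx => (hg x hx).continuousWithinAt
  have hu0 : ∀ᶠ x in atTop, u x = 0 := by
    have := hasCompactSupport_iff_eventuallyEq.mp huc
    rw [coclosedCompact_eq_cocompact] at this
    exact this.filter_mono atTop_le_cocompact
  rw [integral_Ioi_of_hasDerivAt_of_tendsto (f := fun x => g x * ‖u x‖ ^ 2) (m := 0) ?_ ?_
    ((integrableOn_Ici_deriv_mul_norm_sq hgc hg' hu huc).mono_set Ioi_subset_Ici_self) ?_,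
    zero_sub]
  · exact (hgc a self_mem_Ici).mul (hu.continuous.norm.pow 2).continuousWithinAt
  · intro x hx
    exact ((hg x hx.out.le).hasDerivAt (Ici_mem_nhds hx)).mul
      (hu.differentiable one_ne_zero x).hasDerivAt.norm_sq
  · exact tendsto_const_nhds.congr' (hu0.mono fun x hx => by simp [hx])

theorem integral_Ioi_deriv_mul_norm_sq_le
    (hg : ∀ x ∈ Ici a, HasDerivWithinAt g (g' x) (Ici a) x) (hg' : ContinuousOn g' (Ici a))
    (hpos : ∀ x ∈ Ici a, 0 < g' x) (hu : ContDiff ℝ 1 u) (huc : HasCompactSupport u) :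
    ∫ x in Ioi a, g' x * ‖u x‖ ^ 2 ≤
      4 * (∫ x in Ioi a, g x ^ 2 / g' x * ‖deriv u x‖ ^ 2) - 2 * (g a * ‖u a‖ ^ 2) := by
  have hgc : ContinuousOn g (Ici a) := fun x hx => (hg x hx).continuousWithinAt
  have hA := ((integrableOn_Ici_mul_norm_sq hg' hu.continuous huc).mono_set
    Ioi_subset_Ici_self).const_mul (1 / 2)
  have hB := ((integrableOn_Ici_mul_norm_sq
    ((hgc.pow 2).div hg' fun x hx => (hpos x hx).ne')
    (hu.continuous_deriv le_rfl) huc.deriv).mono_set Ioi_subset_Ici_self).const_mul 2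
  have hyoung := setIntegral_mono_on (hA.sub hB)
    ((integrableOn_Ici_deriv_mul_norm_sq hgc hg' hu huc).mono_set Ioi_subset_Ici_self)
    measurableSet_Ioi fun x hx =>
      weighted_young_inner (u x) (deriv u x) (s := g x) (hpos x hx.out.le)
  have hsub := integral_sub hA hB
  rw [integral_const_mul, integral_const_mul] at hsub
  rw [integral_Ioi_deriv_mul_norm_sq hg hg' hu huc] at hyoung
  simp only [Pi.sub_apply, Pi.pow_apply, Pi.div_apply] at hyoung hsub
  linarith

end Weight

theorem integral_Ioi_affine_rpow_mul_norm_sq_le {a b c p : ℝ} (hb : 0 < b) (hc : 0 < c + b * a)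
    (hp : p ≠ 0) {u : ℝ → E} (hu : ContDiff ℝ 1 u) (huc : HasCompactSupport u) :
    b * ∫ x in Ioi a, (c + b * x) ^ (p - 1) * ‖u x‖ ^ 2 ≤
      4 / (p ^ 2 * b) * (∫ x in Ioi a, (c + b * x) ^ (p + 1) * ‖deriv u x‖ ^ 2) -
        2 / p * ((c + b * a) ^ p * ‖u a‖ ^ 2) := by
  have hw : ∀ x ∈ Ici a, 0 < c + b * x := fun x hx =>
    hc.trans_le (by gcongr; exact hx.out)
  have hg : ∀ x ∈ Ici a, HasDerivWithinAt (fun x => (c + b * x) ^ p / p)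
      (b * (c + b * x) ^ (p - 1)) (Ici a) x := by
    intro x hx
    have haffine : HasDerivAt (fun y => c + b * y) b x := by
      simpa using ((hasDerivAt_id x).const_mul b).const_add c
    exact (((haffine.rpow_const (Or.inl (hw x hx).ne')).div_const p).congr_deriv
      (by field_simp)).hasDerivWithinAt
  have hg' : ContinuousOn (fun x => b * (c + b * x) ^ (p - 1)) (Ici a) :=
    continuousOn_const.mul (ContinuousOn.rpow_const (by fun_prop) fun x hx => Or.inl (hw x hx).ne')
  have hquot : ∀ x ∈ Ici a, ((c + b * x) ^ p / p) ^ 2 / (b * (c + b * x) ^ (p - 1)) =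
      1 / (p ^ 2 * b) * (c + b * x) ^ (p + 1) := fun x hx => by
    have hwx := hw x hx
    rw [Real.rpow_add_one hwx.ne', Real.rpow_sub_one hwx.ne']
    have := (Real.rpow_pos_of_pos hwx p).ne'
    field_simp
  have hhardy := integral_Ioi_deriv_mul_norm_sq_le hg hg'
    (fun x hx => mul_pos hb (Real.rpow_pos_of_pos (hw x hx) _)) hu huc
  rw [setIntegral_congr_fun measurableSet_Ioi fun x hx =>
    congrArg (· * ‖deriv u x‖ ^ 2) (hquot x hx.out.le)] at hhardy
  simp only [mul_assoc, integral_const_mul] at hhardy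
  exact hhardy.trans_eq (by ring)

theorem integral_rpow_abs_mul_norm_sq_le {b p : ℝ} (hb : 0 < b) (hp : p ≠ 0) {u : ℝ → E}
    (hu : ContDiff ℝ 1 u) (huc : HasCompactSupport u) :
    b * ∫ x, (1 + b * |x|) ^ (p - 1) * ‖u x‖ ^ 2 ≤
      4 / (p ^ 2 * b) * (∫ x, (1 + b * |x|) ^ (p + 1) * ‖deriv u x‖ ^ 2) -
        4 / p * ‖u 0‖ ^ 2 := by
  have hc : 0 < 1 + b * 0 := by simp
  have hright := integral_Ioi_affine_rpow_mul_norm_sq_le hb hc hp hu huc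
  have hleft := integral_Ioi_affine_rpow_mul_norm_sq_le hb hc hp (u := fun x => u (-x))
    (hu.comp contDiff_neg) (huc.comp_homeomorph (Homeomorph.neg ℝ))
  simp only [mul_zero, add_zero, Real.one_rpow, one_mul, deriv_comp_neg, norm_neg, neg_zero]
    at hright hleft
  rw [integral_comp_abs_mul (φ := fun x => (1 + b * x) ^ (p - 1))
      (integrable_rpow_abs_mul_norm_sq hb.le _ hu.continuous huc),
    integral_comp_abs_mul (φ := fun x => (1 + b * x) ^ (p + 1))
      (integrable_rpow_abs_mul_norm_sq hb.le _ (hu.continuous_deriv le_rfl) huc.deriv),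
    mul_add]
  exact (add_le_add hright hleft).trans_eq (by ring)

theorem stmt18_general {σ : ℝ} (hσ : σ ≠ -1) {b : ℝ} (hb : 0 < b) {u : ℝ → E}
    (hu : ContDiff ℝ 1 u) (huc : HasCompactSupport u) :
    b ^ 3 * ∫ x : ℝ, (1 + b * |x|) ^ (-(σ + 2)) * ‖u x‖ ^ 2 ≤
      (4 / |σ + 1| + 4 / (σ + 1) ^ 2) *
        (b ^ 2 * ‖u 0‖ ^ 2 + b * ∫ x : ℝ, (1 + b * |x|) ^ (-σ) * ‖deriv u x‖ ^ 2) := by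
  have hp : σ + 1 ≠ 0 := fun h => hσ (eq_neg_of_add_eq_zero_left h)
  have hhardy := integral_rpow_abs_mul_norm_sq_le hb (neg_ne_zero.mpr hp) hu huc
  rw [show -(σ + 1) - 1 = -(σ + 2) by ring, show -(σ + 1) + 1 = -σ by ring] at hhardy
  set A := ∫ x, (1 + b * |x|) ^ (-(σ + 2)) * ‖u x‖ ^ 2
  set B := ∫ x, (1 + b * |x|) ^ (-σ) * ‖deriv u x‖ ^ 2
  have hB : 0 ≤ B := integral_nonneg fun x => by positivity
  have hboundary : 4 / (σ + 1) ≤ 4 / |σ + 1| + 4 / (σ + 1) ^ 2 :=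
    calc 4 / (σ + 1) ≤ 4 / |σ + 1| := by simpa [abs_div] using le_abs_self (4 / (σ + 1))
      _ ≤ _ := le_add_of_nonneg_right (by positivity)
  have henergy : 4 / (σ + 1) ^ 2 ≤ 4 / |σ + 1| + 4 / (σ + 1) ^ 2 :=
    le_add_of_nonneg_left (by positivity)
  calc b ^ 3 * A = b ^ 2 * (b * A) := by ring
    _ ≤ b ^ 2 * (4 / ((-(σ + 1)) ^ 2 * b) * B - 4 / -(σ + 1) * ‖u 0‖ ^ 2) := by gcongr
    _ = 4 / (σ + 1) * (b ^ 2 * ‖u 0‖ ^ 2) + 4 / (σ + 1) ^ 2 * (b * B) := by field_simp; ring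
    _ ≤ (4 / |σ + 1| + 4 / (σ + 1) ^ 2) * (b ^ 2 * ‖u 0‖ ^ 2) +
        (4 / |σ + 1| + 4 / (σ + 1) ^ 2) * (b * B) :=
      add_le_add (mul_le_mul_of_nonneg_right hboundary (by positivity))
        (mul_le_mul_of_nonneg_right henergy (mul_nonneg hb.le hB))
    _ = _ := (mul_add _ _ _).symm

end Hardy

/-- Weighted Hardy/trace-type inequality at the core of the Morawetz commutator
positivity estimate: for `σ > 1` there is `C > 0` (depending only on `σ`) such that
for all `b > 0` and all `C¹` compactly supported `u : ℝ → ℝ`,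
`b³ ∫ (1+b|x|)^{−σ−2} u² ≤ C (b² u(0)² + b ∫ (1+b|x|)^{−σ} (u′)²)`. -/
theorem stmt18 (σ : ℝ) (hσ : 1 < σ) :
    ∃ C > 0, ∀ b : ℝ, 0 < b → ∀ u : ℝ → ℝ, ContDiff ℝ 1 u → HasCompactSupport u →
      b^3 * ∫ x : ℝ, (1 + b*|x|) ^ (-(σ+2)) * (u x)^2 ≤
        C * (b^2 * (u 0)^2 + b * ∫ x : ℝ, (1 + b*|x|) ^ (-σ) * (deriv u x)^2) := by
  have hpos : 0 < 4 / |σ + 1| + 4 / (σ + 1) ^ 2 :=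
    add_pos_of_pos_of_nonneg (div_pos four_pos (abs_pos.mpr (by linarith))) (by positivity)
  refine ⟨_, hpos, fun b hb u hu huc => ?_⟩
  simpa only [Real.norm_eq_abs, sq_abs] using stmt18_general (by linarith) hb hu huc
end
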